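/- arXiv:2503.08066 — 4 statements merged into one kernel-verified Lean document; each statement's English description precedes it below -/
import Mathlib

section
/- Let P be a symmetric positive definite real n×n matrix, M a real n×n matrix, D a real n×σ matrix, and π > 0, κ > 0 real numbers. Assume the matrix inequality M·P⁻¹ + P⁻¹·Mᵀ + π·I_n ⪯ −κ·P⁻¹, meaning that the symmetric matrix −κ·P⁻¹ − (M·P⁻¹ + P⁻¹·Mᵀ + π·I_n) is positive semidefinite. Then for all x ∈ ℝⁿ and all w ∈ ℝ^σ: 2·⟨P·x, M·x + D·w⟩ ≤ −κ·⟨x, P·x⟩ + (‖D‖²/π)·‖w‖². -/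
/-! With `y = P x` and `P⁻¹ y = x`, the quadratic form of the matrix inequality at `y` reads
`2⟨y, M x⟩ + pi ‖y‖² ≤ -κ⟨x, y⟩`. Young's inequality with weight `pi` bounds the disturbance term,
`2⟨y, D w⟩ ≤ pi ‖y‖² + (‖D‖² / pi) ‖w‖²`, and adding the two cancels `pi ‖y‖²`. This works for
operators on any Hilbert space, matrices entering through the star-algebra isomorphism
`Matrix.toEuclideanCLM`. -/

open RealInnerProductSpace Matrix

/-- The operator norm of a rectangular real matrix with respect to Euclidean norms. -/
noncomputable def euclideanOpNorm {n σ : ℕ} (D : Matrix (Fin n) (Fin σ) ℝ) : ℝ :=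
  ‖(LinearMap.toContinuousLinearMap (Matrix.toEuclideanLin D))‖

theorem isSelfAdjoint_of_mul_eq_one {R : Type*} [Monoid R] [StarMul R] {a b : R}
    (ha : IsSelfAdjoint a) (hba : b * a = 1) : IsSelfAdjoint b := by
  have hab : a * star b = 1 := by simpa [ha.star_eq] using congrArg star hba
  exact (left_inv_eq_right_inv hba hab).symm

section Operator

open RCLike ContinuousLinearMap
open scoped InnerProductSpace

variable {𝕜 E F : Type*} [RCLike 𝕜] [NormedAddCommGroup E] [InnerProductSpace 𝕜 E]
  [SeminormedAddCommGroup F] [NormedSpace 𝕜 F]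

theorem two_mul_re_inner_clm_apply_le_add (D : F →L[𝕜] E) {ε : ℝ} (hε : 0 < ε) (y : E) (w : F) :
    2 * re ⟪y, D w⟫_𝕜 ≤ ε * ‖y‖ ^ 2 + ‖D‖ ^ 2 / ε * ‖w‖ ^ 2 :=
  calc
    2 * re ⟪y, D w⟫_𝕜 ≤ 2 * (‖y‖ * ‖D w‖) := by gcongr; exact re_inner_le_norm y (D w)
    _ ≤ 2 * (‖y‖ * (‖D‖ * ‖w‖)) := by gcongr; exact D.le_opNorm w
    _ = 2 * ‖y‖ * (‖D‖ * ‖w‖) := by ring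
    _ ≤ ε * ‖y‖ ^ 2 + ε⁻¹ * (‖D‖ * ‖w‖) ^ 2 := two_mul_le_add_mul_sq hε
    _ = ε * ‖y‖ ^ 2 + ‖D‖ ^ 2 / ε * ‖w‖ ^ 2 := by ring

theorem re_inner_clm_apply_le_of_le {A B : E →L[𝕜] E} (h : A ≤ B) (y : E) :
    re ⟪y, A y⟫_𝕜 ≤ re ⟪y, B y⟫_𝕜 := by
  simpa [inner_sub_right] using ((le_def A B).mp h).re_inner_nonneg_right y

variable [CompleteSpace E]

theorem re_inner_star_clm_apply_self (A : E →L[𝕜] E) (y : E) :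
    re ⟪y, star A y⟫_𝕜 = re ⟪y, A y⟫_𝕜 := by
  rw [star_eq_adjoint, adjoint_inner_right, inner_re_symm]

theorem two_mul_re_inner_add_le_of_add_star_le {N Q : E →L[𝕜] E} {ε κ : ℝ}
    (h : N + star N + (ε : 𝕜) • 1 ≤ -((κ : 𝕜) • Q)) (y : E) :
    2 * re ⟪y, N y⟫_𝕜 + ε * ‖y‖ ^ 2 ≤ -κ * re ⟪y, Q y⟫_𝕜 := by
  have hy := re_inner_clm_apply_le_of_le h y
  simp only [_root_.add_apply, _root_.neg_apply, _root_.smul_apply, one_apply_eq_self,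
    inner_add_right, inner_neg_right, inner_smul_right, map_add, map_neg, re_ofReal_mul,
    inner_self_eq_norm_sq, re_inner_star_clm_apply_self] at hy
  linarith

theorem iss_dissipation_from_matrix_inequality_general {P Q M : E →L[𝕜] E} (D : F →L[𝕜] E)
    (hP : IsSelfAdjoint P) (hQP : Q * P = 1) {pi κ : ℝ} (hpi : 0 < pi)
    (hLMI : M * Q + Q * star M + (pi : 𝕜) • 1 ≤ -((κ : 𝕜) • Q)) (x : E) (w : F) :
    2 * re ⟪P x, M x + D w⟫_𝕜 ≤ -κ * re ⟪x, P x⟫_𝕜 + ‖D‖ ^ 2 / pi * ‖w‖ ^ 2 := by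
  have hQ : IsSelfAdjoint Q := isSelfAdjoint_of_mul_eq_one hP hQP
  have hQPx : Q (P x) = x := DFunLike.congr_fun hQP x
  have hdrift : 2 * re ⟪P x, M x⟫_𝕜 + pi * ‖P x‖ ^ 2 ≤ -κ * re ⟪x, P x⟫_𝕜 := by
    have hN : M * Q + star (M * Q) + (pi : 𝕜) • 1 ≤ -((κ : 𝕜) • Q) := by
      rwa [star_mul, hQ.star_eq]
    simpa only [mul_apply_eq_comp, hQPx, inner_re_symm (P x) x] using
      two_mul_re_inner_add_le_of_add_star_le hN (P x)
  have hdisturbance := two_mul_re_inner_clm_apply_le_add D hpi (P x) w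
  rw [inner_add_right, map_add]
  linarith

end Operator

section EuclideanMatrix

open scoped ComplexOrder

variable {𝕜 ι : Type*} [RCLike 𝕜] [Fintype ι] [DecidableEq ι]

theorem toEuclideanCLM_le_toEuclideanCLM_iff {A B : Matrix ι ι 𝕜} :
    toEuclideanCLM (𝕜 := 𝕜) A ≤ toEuclideanCLM (𝕜 := 𝕜) B ↔ (B - A).PosSemidef := by
  rw [ContinuousLinearMap.le_def, ← map_sub, ← ContinuousLinearMap.isPositive_toLinearMap_iff,
    coe_toEuclideanCLM_eq_toEuclideanLin, isPositive_toEuclideanLin_iff]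

theorem toEuclideanCLM_lyapunov_le_neg_smul_iff {M Q : Matrix ι ι 𝕜} {a b : 𝕜} :
    toEuclideanCLM (𝕜 := 𝕜) M * toEuclideanCLM (𝕜 := 𝕜) Q +
        toEuclideanCLM (𝕜 := 𝕜) Q * star (toEuclideanCLM (𝕜 := 𝕜) M) + a • 1 ≤
        -(b • toEuclideanCLM (𝕜 := 𝕜) Q) ↔
      (-(b • Q) - (M * Q + Q * Mᴴ + a • 1)).PosSemidef := by
  simp only [← toEuclideanCLM_le_toEuclideanCLM_iff, ← star_eq_conjTranspose, map_add, map_mul,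
    map_star, map_smul, map_neg, map_one]

theorem toEuclideanCLM_inv_mul_self {A : Matrix ι ι 𝕜} (hA : IsUnit A) :
    toEuclideanCLM (𝕜 := 𝕜) A⁻¹ * toEuclideanCLM (𝕜 := 𝕜) A = 1 := by
  rw [← map_mul, nonsing_inv_mul A ((isUnit_iff_isUnit_det A).mp hA), map_one]

end EuclideanMatrix

/-- ISS dissipation inequality from the matrix inequality: if `P` is symmetric
positive definite and `M P⁻¹ + P⁻¹ Mᵀ + pi·I ⪯ −κ·P⁻¹`, then for all `x, w`,
`2⟨Px, Mx + Dw⟩ ≤ −κ⟨x, Px⟩ + (‖D‖²/pi)‖w‖²`. -/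
theorem iss_dissipation_from_matrix_inequality
    {n σ : ℕ}
    (P M : Matrix (Fin n) (Fin n) ℝ) (D : Matrix (Fin n) (Fin σ) ℝ)
    (hP : P.PosDef) (pi κ : ℝ) (hpi : 0 < pi) (hκ : 0 < κ)
    (hLMI : (-(κ • P⁻¹) -
      (M * P⁻¹ + P⁻¹ * Mᵀ + pi • (1 : Matrix (Fin n) (Fin n) ℝ))).PosSemidef) :
    ∀ (x : EuclideanSpace ℝ (Fin n)) (w : EuclideanSpace ℝ (Fin σ)),
      2 * ⟪Matrix.toEuclideanLin P x,
            Matrix.toEuclideanLin M x + Matrix.toEuclideanLin D w⟫ ≤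
        -κ * ⟪x, Matrix.toEuclideanLin P x⟫
          + euclideanOpNorm D ^ 2 / pi * ‖w‖ ^ 2 := fun x w ↦
  iss_dissipation_from_matrix_inequality_general (toEuclideanLin D).toContinuousLinearMap
    (hP.isHermitian.isSelfAdjoint.map (toEuclideanCLM (𝕜 := ℝ)))
    (toEuclideanCLM_inv_mul_self hP.isUnit) hpi
    (toEuclideanCLM_lyapunov_le_neg_smul_iff.mpr hLMI) x w
end

section
/- Let A (n×N), B (n×m), D (n×σ), J (N×T), U (m×T), W (σ×T), X1 (n×T) be real matrices with X1 = A·J + B·U + D·W. Let P be a symmetric positive definite real n×n matrix, let ℵ : ℝⁿ → (N×n real matrices) and Φ : ℝⁿ → (T×n real matrices) satisfy, for every x ∈ ℝⁿ, J·Φ(x) = ℵ(x)·P⁻¹, and let F : ℝⁿ → ℝᴺ be given by F(x) = ℵ(x)·x. Let π > 0 and κ > 0, and assume that for every x ∈ ℝⁿ the symmetric matrix −κ·P⁻¹ − ((X1 − D·W)·Φ(x) + Φ(x)ᵀ·(X1 − D·W)ᵀ + π·I_n) is positive semidefinite. Define the controller u(x) := U·Φ(x)·P·x and the function V(x) :=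 ⟨x, P·x⟩. Then: (i) λ_min(P)·‖x‖² ≤ V(x) ≤ λ_max(P)·‖x‖² for all x ∈ ℝⁿ, where λ_min(P) and λ_max(P) are the smallest and largest eigenvalues of P; and (ii) for all x ∈ ℝⁿ and all w ∈ ℝ^σ, 2·⟨P·x, A·F(x) + B·u(x) + D·w⟩ ≤ −κ·V(x) + (‖D‖²/π)·‖w‖². -/
/-!
For (i), expand `x` in an orthonormal eigenbasis `b` of `P`: `⟪x, P x⟫ = ∑ i, μ i * ‖⟪b i, x⟫‖ ^ 2`,
while `‖x‖ ^ 2 = ∑ i, ‖⟪b i, x⟫‖ ^ 2`.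

For (ii), the data relation says `X1 - D W = A J + B U`, so `G = (X1 - D W) Φ(x)` satisfies
`G P x = A F(x) + B u(x)`: in the coordinate `y = P x` the undisturbed closed-loop field is `G y`.
The matrix inequality evaluated at `y` gives `2 ⟪y, G y⟫ ≤ -κ V(x) - π ‖y‖ ^ 2`, because
`⟪y, P⁻¹ y⟫ = V(x)`, and the margin `π ‖y‖ ^ 2` absorbs the disturbance by Young's inequality
`2 ⟪y, D w⟫ ≤ π ‖y‖ ^ 2 + ‖D w‖ ^ 2 / π`.
-/

open RealInnerProductSpace Matrix

section Eigenbasis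

variable {𝕜 E ι : Type*} [RCLike 𝕜] [NormedAddCommGroup E] [InnerProductSpace 𝕜 E] [Fintype ι]

theorem inner_apply_self_eq_sum_of_eigenbasis (b : OrthonormalBasis ι 𝕜 E) {f : E →ₗ[𝕜] E}
    {μ : ι → 𝕜} (hf : ∀ i, f (b i) = μ i • b i) (x : E) :
    inner 𝕜 x (f x) = ∑ i, μ i * ‖inner 𝕜 (b i) x‖ ^ 2 := by
  have expansion : f x = ∑ i, (inner 𝕜 (b i) x * μ i) • b i := by
    conv_lhs => rw [← b.sum_repr' x]
    simp only [map_sum, map_smul, hf, smul_smul]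
  rw [expansion, inner_sum]
  refine Finset.sum_congr rfl fun i _ => ?_
  rw [inner_smul_right, mul_right_comm, mul_comm, ← inner_conj_symm x, RCLike.mul_conj]

theorem re_inner_apply_self_eq_sum_of_eigenbasis (b : OrthonormalBasis ι 𝕜 E) {f : E →ₗ[𝕜] E}
    {μ : ι → ℝ} (hf : ∀ i, f (b i) = (μ i : 𝕜) • b i) (x : E) :
    RCLike.re (inner 𝕜 x (f x)) = ∑ i, μ i * ‖inner 𝕜 (b i) x‖ ^ 2 := by
  rw [inner_apply_self_eq_sum_of_eigenbasis b hf x]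
  exact_mod_cast RCLike.ofReal_re (K := 𝕜) _

theorem iInf_mul_norm_sq_le_re_inner_apply_self (b : OrthonormalBasis ι 𝕜 E) {f : E →ₗ[𝕜] E}
    {μ : ι → ℝ} (hf : ∀ i, f (b i) = (μ i : 𝕜) • b i) (x : E) :
    (⨅ i, μ i) * ‖x‖ ^ 2 ≤ RCLike.re (inner 𝕜 x (f x)) := by
  rw [re_inner_apply_self_eq_sum_of_eigenbasis b hf, ← b.sum_sq_norm_inner_right x,
    Finset.mul_sum]
  gcongr with i
  exact ciInf_le (Set.finite_range μ).bddBelow i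

theorem re_inner_apply_self_le_iSup_mul_norm_sq (b : OrthonormalBasis ι 𝕜 E) {f : E →ₗ[𝕜] E}
    {μ : ι → ℝ} (hf : ∀ i, f (b i) = (μ i : 𝕜) • b i) (x : E) :
    RCLike.re (inner 𝕜 x (f x)) ≤ (⨆ i, μ i) * ‖x‖ ^ 2 := by
  rw [re_inner_apply_self_eq_sum_of_eigenbasis b hf, ← b.sum_sq_norm_inner_right x,
    Finset.mul_sum]
  gcongr with i
  exact le_ciSup (Set.finite_range μ).bddAbove i

end Eigenbasis

theorem two_mul_re_inner_le_mul_norm_sq_add_div {𝕜 E : Type*} [RCLike 𝕜]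
    [SeminormedAddCommGroup E] [InnerProductSpace 𝕜 E] (x y : E) {c : ℝ} (hc : 0 < c) :
    2 * RCLike.re (inner 𝕜 x y) ≤ c * ‖x‖ ^ 2 + ‖y‖ ^ 2 / c :=
  calc 2 * RCLike.re (inner 𝕜 x y) ≤ 2 * (‖x‖ * ‖y‖) := by gcongr; exact re_inner_le_norm x y
    _ ≤ c * ‖x‖ ^ 2 + ‖y‖ ^ 2 / c :=
      two_mul_le_add_of_sq_le_mul (by positivity) (by positivity) (le_of_eq (by field_simp))

theorem mul_eq_add_of_data_relation {R n N m σ T : Type*} [Ring R] [Fintype n] [DecidableEq n]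
    [Fintype N] [Fintype m] [Fintype σ] [Fintype T]
    {A : Matrix n N R} {B : Matrix n m R} {D : Matrix n σ R} {J : Matrix N T R}
    {U : Matrix m T R} {W : Matrix σ T R} {X₁ : Matrix n T R} {P Q : Matrix n n R}
    {M : Matrix N n R} {Φ : Matrix T n R} (hdata : X₁ = A * J + B * U + D * W) (hQP : Q * P = 1)
    (hJΦ : J * Φ = M * Q) :
    (X₁ - D * W) * Φ * P = A * M + B * (U * Φ * P) := by
  have hM : J * Φ * P = M := by rw [hJΦ, Matrix.mul_assoc, hQP, Matrix.mul_one]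
  calc (X₁ - D * W) * Φ * P = A * (J * Φ * P) + B * (U * Φ * P) := by
        rw [hdata, add_sub_cancel_right]
        simp only [Matrix.add_mul, Matrix.mul_assoc]
    _ = A * M + B * (U * Φ * P) := by rw [hM]

section ComplexOrder

open scoped ComplexOrder

variable {𝕜 n : Type*} [RCLike 𝕜] [Fintype n] [DecidableEq n]

theorem toEuclideanLin_eigenvectorBasis {P : Matrix n n 𝕜} (hP : P.IsHermitian) (i : n) :
    toEuclideanLin P (hP.eigenvectorBasis i) = (hP.eigenvalues i : 𝕜) • hP.eigenvectorBasis i := by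
  ext j
  simpa [RCLike.real_smul_eq_coe_mul] using congrFun (hP.mulVec_eigenvectorBasis i) j

theorem re_inner_toEuclideanLin_conjTranspose (G : Matrix n n 𝕜) (y : EuclideanSpace 𝕜 n) :
    RCLike.re (inner 𝕜 y (toEuclideanLin Gᴴ y)) =
      RCLike.re (inner 𝕜 y (toEuclideanLin G y)) := by
  rw [toEuclideanLin_conjTranspose_eq_adjoint, LinearMap.adjoint_inner_right, inner_re_symm]

theorem two_mul_re_inner_le_of_posSemidef {κ c : ℝ} {Q G : Matrix n n 𝕜}
    (h : (-(κ • Q) - (G + Gᴴ + c • (1 : Matrix n n 𝕜))).PosSemidef) (y : EuclideanSpace 𝕜 n) :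
    2 * RCLike.re (inner 𝕜 y (toEuclideanLin G y)) ≤
      -κ * RCLike.re (inner 𝕜 y (toEuclideanLin Q y)) - c * ‖y‖ ^ 2 := by
  have expanded : 0 ≤ -(κ * RCLike.re (inner 𝕜 y (toEuclideanLin Q y))) -
      (RCLike.re (inner 𝕜 y (toEuclideanLin G y)) + RCLike.re (inner 𝕜 y (toEuclideanLin G y)) +
        c * ‖y‖ ^ 2) := by
    simpa only [RCLike.real_smul_eq_coe_smul (K := 𝕜), map_sub, map_neg, map_add, map_smul,
      LinearMap.sub_apply, LinearMap.neg_apply, LinearMap.add_apply, LinearMap.smul_apply,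
      toLpLin_one, LinearMap.id_apply, inner_sub_right, inner_neg_right, inner_add_right,
      inner_smul_right, RCLike.re_ofReal_mul, inner_self_eq_norm_sq,
      re_inner_toEuclideanLin_conjTranspose]
      using (isPositive_toEuclideanLin_iff.mpr h).re_inner_nonneg_right y
  linarith

theorem two_mul_re_inner_add_le_of_posSemidef {κ c : ℝ} (hc : 0 < c) {P Q G : Matrix n n 𝕜}
    (hQP : Q * P = 1) (h : (-(κ • Q) - (G + Gᴴ + c • (1 : Matrix n n 𝕜))).PosSemidef)
    (x d : EuclideanSpace 𝕜 n) :
    2 * RCLike.re (inner 𝕜 (toEuclideanLin P x) (toEuclideanLin (G * P) x + d)) ≤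
      -κ * RCLike.re (inner 𝕜 x (toEuclideanLin P x)) + ‖d‖ ^ 2 / c := by
  have hQ : toEuclideanLin Q (toEuclideanLin P x) = x := by
    rw [← LinearMap.comp_apply, ← toLpLin_mul_same, hQP, toLpLin_one, LinearMap.id_apply]
  have lmi := two_mul_re_inner_le_of_posSemidef h (toEuclideanLin P x)
  rw [hQ, inner_re_symm (toEuclideanLin P x) x] at lmi
  have young := two_mul_re_inner_le_mul_norm_sq_add_div (𝕜 := 𝕜) (toEuclideanLin P x) d hc
  rw [toLpLin_mul_same, LinearMap.comp_apply, inner_add_right, map_add]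
  linarith

theorem data_driven_ISS_Lyapunov_general {N m σ T : Type*} [Fintype N] [DecidableEq N]
    [Fintype m] [DecidableEq m] [Fintype σ] [DecidableEq σ] [Fintype T]
    (A : Matrix n N 𝕜) (B : Matrix n m 𝕜) (D : Matrix n σ 𝕜) (J : Matrix N T 𝕜)
    (U : Matrix m T 𝕜) (W : Matrix σ T 𝕜) (X1 : Matrix n T 𝕜)
    (hdata : X1 = A * J + B * U + D * W)
    (P : Matrix n n 𝕜) (hP : P.IsHermitian) (hPunit : IsUnit P)
    (ℵ : EuclideanSpace 𝕜 n → Matrix N n 𝕜) (Φ : EuclideanSpace 𝕜 n → Matrix T n 𝕜)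
    (hJΦ : ∀ x, J * Φ x = ℵ x * P⁻¹)
    (F : EuclideanSpace 𝕜 n → EuclideanSpace 𝕜 N) (hF : ∀ x, F x = toEuclideanLin (ℵ x) x)
    (pi κ : ℝ) (hpi : 0 < pi)
    (hLMI : ∀ x, (-(κ • P⁻¹) - ((X1 - D * W) * Φ x + (Φ x)ᴴ * (X1 - D * W)ᴴ +
      pi • (1 : Matrix n n 𝕜))).PosSemidef)
    (u : EuclideanSpace 𝕜 n → EuclideanSpace 𝕜 m)
    (hu : ∀ x, u x = toEuclideanLin (U * Φ x * P) x)
    (V : EuclideanSpace 𝕜 n → ℝ)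
    (hV : ∀ x, V x = RCLike.re (inner 𝕜 x (toEuclideanLin P x))) :
    (∀ x, (⨅ i, hP.eigenvalues i) * ‖x‖ ^ 2 ≤ V x ∧
      V x ≤ (⨆ i, hP.eigenvalues i) * ‖x‖ ^ 2) ∧
    (∀ x w, 2 * RCLike.re (inner 𝕜 (toEuclideanLin P x)
        (toEuclideanLin A (F x) + toEuclideanLin B (u x) + toEuclideanLin D w)) ≤
      -κ * V x + ‖(toEuclideanLin D).toContinuousLinearMap‖ ^ 2 / pi * ‖w‖ ^ 2) := by
  have eigen := toEuclideanLin_eigenvectorBasis hP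
  refine ⟨fun x => hV x ▸ ⟨iInf_mul_norm_sq_le_re_inner_apply_self _ eigen x,
    re_inner_apply_self_le_iSup_mul_norm_sq _ eigen x⟩, fun x w => ?_⟩
  have hinv : P⁻¹ * P = 1 := nonsing_inv_mul P ((isUnit_iff_isUnit_det P).mp hPunit)
  have closed_loop : toEuclideanLin A (F x) + toEuclideanLin B (u x) =
      toEuclideanLin ((X1 - D * W) * Φ x * P) x := by
    rw [mul_eq_add_of_data_relation hdata hinv (hJΦ x), hF, hu, map_add, toLpLin_mul_same _ A,
      toLpLin_mul_same _ B, LinearMap.add_apply, LinearMap.comp_apply, LinearMap.comp_apply]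
  have lmi := hLMI x
  rw [← conjTranspose_mul] at lmi
  have disturbance : ‖toEuclideanLin D w‖ ^ 2 / pi ≤
      ‖(toEuclideanLin D).toContinuousLinearMap‖ ^ 2 / pi * ‖w‖ ^ 2 := by
    rw [div_mul_eq_mul_div, ← mul_pow]
    gcongr
    exact (toEuclideanLin D).toContinuousLinearMap.le_opNorm w
  rw [closed_loop, hV]
  exact (two_mul_re_inner_add_le_of_posSemidef hpi hinv lmi x _).trans (by gcongr)

end ComplexOrder

/-- Theorem 3.7 (data-driven ISS Lyapunov function): under the data relation
`X1 = A·J + B·U + D·W`, the design conditions `J·Φ(x) = ℵ(x)·P⁻¹` and the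
data-based LMI `(X1 − D·W)Φ(x) + Φ(x)ᵀ(X1 − D·W)ᵀ + pi·I ⪯ −κ·P⁻¹`,
the function `V(x) = ⟨x, Px⟩` satisfies the sandwich bound with the extreme
eigenvalues of `P` and the ISS dissipation inequality for the closed loop
`ẋ = A·F(x) + B·u(x) + D·w` with `u(x) = U·Φ(x)·P·x` and `ρ = ‖D‖²/pi`. -/
theorem data_driven_ISS_Lyapunov
    {n N m σ T : ℕ}
    (A : Matrix (Fin n) (Fin N) ℝ) (B : Matrix (Fin n) (Fin m) ℝ)
    (D : Matrix (Fin n) (Fin σ) ℝ)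
    (J : Matrix (Fin N) (Fin T) ℝ) (U : Matrix (Fin m) (Fin T) ℝ)
    (W : Matrix (Fin σ) (Fin T) ℝ) (X1 : Matrix (Fin n) (Fin T) ℝ)
    (hdata : X1 = A * J + B * U + D * W)
    (P : Matrix (Fin n) (Fin n) ℝ) (hP : P.PosDef)
    (ℵ : EuclideanSpace ℝ (Fin n) → Matrix (Fin N) (Fin n) ℝ)
    (Φ : EuclideanSpace ℝ (Fin n) → Matrix (Fin T) (Fin n) ℝ)
    (hJΦ : ∀ x, J * Φ x = ℵ x * P⁻¹)
    (F : EuclideanSpace ℝ (Fin n) → EuclideanSpace ℝ (Fin N))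
    (hF : ∀ x, F x = Matrix.toEuclideanLin (ℵ x) x)
    (pi κ : ℝ) (hpi : 0 < pi) (hκ : 0 < κ)
    (hLMI : ∀ x, (-(κ • P⁻¹) -
      ((X1 - D * W) * Φ x + (Φ x)ᵀ * (X1 - D * W)ᵀ +
        pi • (1 : Matrix (Fin n) (Fin n) ℝ))).PosSemidef)
    (u : EuclideanSpace ℝ (Fin n) → EuclideanSpace ℝ (Fin m))
    (hu : ∀ x, u x = Matrix.toEuclideanLin (U * Φ x * P) x)
    (V : EuclideanSpace ℝ (Fin n) → ℝ)
    (hV : ∀ x, V x = ⟪x, Matrix.toEuclideanLin P x⟫) :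
    (∀ x : EuclideanSpace ℝ (Fin n),
        (⨅ i, hP.1.eigenvalues i) * ‖x‖ ^ 2 ≤ V x ∧
        V x ≤ (⨆ i, hP.1.eigenvalues i) * ‖x‖ ^ 2) ∧
    (∀ (x : EuclideanSpace ℝ (Fin n)) (w : EuclideanSpace ℝ (Fin σ)),
        2 * ⟪Matrix.toEuclideanLin P x,
              Matrix.toEuclideanLin A (F x) + Matrix.toEuclideanLin B (u x) +
                Matrix.toEuclideanLin D w⟫ ≤
          -κ * V x + euclideanOpNorm D ^ 2 / pi * ‖w‖ ^ 2) :=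
  data_driven_ISS_Lyapunov_general A B D J U W X1 hdata P hP.1 hP.isUnit ℵ Φ hJΦ F hF pi κ hpi
    hLMI u hu V hV
end

section
/- Let M ≥ 1 be a natural number and, for each i ∈ {1,…,M}, let κ_i > 0, α_i > 0, ρ_i ≥ 0 be real constants, v_i ≥ 0 a nonnegative real number, and d_i a real number satisfying d_i ≤ −κ_i·v_i + ρ_i·Σ_{j≠i} v_j/α_j. Suppose there exists μ < 0 such that for every j ∈ {1,…,M}, −κ_j + Σ_{i≠j} ρ_i/α_j ≤ μ. Then Σ_{i=1}^M d_i ≤ μ·Σ_{i=1}^M v_i; equivalently, with κ := −μ > 0, Σ_{i=1}^M d_i ≤ −κ·Σ_{i=1}^M v_i. -/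
/-!
The hypotheses say `d ≤ A v` and `𝟙ᵀ A ≤ μ 𝟙ᵀ` for `A = -K + ρ̂`, so the bound is an instance of
weak linear programming duality: since `v ≥ 0`, `𝟙ᵀ d ≤ 𝟙ᵀ (A v) = (𝟙ᵀ A) v ≤ μ 𝟙ᵀ v`.
-/

open Finset

section SmallGain

open scoped Matrix

theorem dotProduct_le_dotProduct_of_le_mulVec {m n R : Type*} [Fintype m] [Fintype n]
    [Semiring R] [PartialOrder R] [IsOrderedRing R] {A : Matrix m n R} {y d : m → R} {u v : n → R}
    (hy : 0 ≤ y) (hv : 0 ≤ v) (hd : d ≤ A *ᵥ v) (hu : y ᵥ* A ≤ u) : y ⬝ᵥ d ≤ u ⬝ᵥ v :=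
  calc y ⬝ᵥ d ≤ y ⬝ᵥ A *ᵥ v := dotProduct_le_dotProduct_of_nonneg_left hd hy
    _ = y ᵥ* A ⬝ᵥ v := Matrix.dotProduct_mulVec y A v
    _ ≤ u ⬝ᵥ v := dotProduct_le_dotProduct_of_nonneg_right hu hv

theorem small_gain_sum_bound_general {m n R : Type*} [Fintype m] [Fintype n]
    [Semiring R] [PartialOrder R] [IsOrderedRing R] {A : Matrix m n R} {d : m → R} {v : n → R}
    {μ : R} (hv : 0 ≤ v) (hd : d ≤ A *ᵥ v) (hA : ∀ j, (1 ᵥ* A) j ≤ μ) :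
    ∑ i, d i ≤ μ * ∑ j, v j :=
  calc ∑ i, d i = 1 ⬝ᵥ d := (one_dotProduct d).symm
    _ ≤ (fun _ => μ) ⬝ᵥ v := dotProduct_le_dotProduct_of_le_mulVec zero_le_one hv hd hA
    _ = μ * ∑ j, v j := (mul_sum univ v μ).symm

variable {ι 𝕜 : Type*} [DecidableEq ι]

/-- The gain matrix `ρ̂` of the small-gain condition, with entries `ρ i / α j` off the diagonal
and zero diagonal. -/
def gainMatrix [DivisionSemiring 𝕜] (ρ α : ι → 𝕜) : Matrix ι ι 𝕜 :=
  Matrix.of fun i j => if i = j then 0 else ρ i / α j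

theorem gainMatrix_mulVec_apply [Fintype ι] [Semifield 𝕜] (ρ α v : ι → 𝕜) (i : ι) :
    (gainMatrix ρ α *ᵥ v) i = ρ i * ∑ j ∈ univ.erase i, v j / α j := by
  simp only [Matrix.mulVec, dotProduct, gainMatrix, Matrix.of_apply, ite_mul, zero_mul,
    ← filter_ne, sum_filter, ite_not, mul_sum, mul_ite, mul_zero, div_mul_eq_mul_div, mul_div_assoc]

theorem one_vecMul_gainMatrix_apply [Fintype ι] [DivisionSemiring 𝕜] (ρ α : ι → 𝕜) (j : ι) :
    (1 ᵥ* gainMatrix ρ α) j = ∑ i ∈ univ.erase j, ρ i / α j := by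
  simp only [Matrix.vecMul, one_dotProduct, gainMatrix, Matrix.of_apply, ← filter_ne', sum_filter,
    ne_eq, ite_not]

/-- The matrix `-K + ρ̂` of the small-gain condition, where `K = diag κ`; the condition bounds its
column sums. -/
def smallGainMatrix [DivisionRing 𝕜] (κ ρ α : ι → 𝕜) : Matrix ι ι 𝕜 :=
  Matrix.diagonal (-κ) + gainMatrix ρ α

theorem smallGainMatrix_mulVec_apply [Fintype ι] [Field 𝕜] (κ ρ α v : ι → 𝕜) (i : ι) :
    (smallGainMatrix κ ρ α *ᵥ v) i = -κ i * v i + ρ i * ∑ j ∈ univ.erase i, v j / α j := by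
  rw [smallGainMatrix, Matrix.add_mulVec, Pi.add_apply, Matrix.mulVec_diagonal, Pi.neg_apply,
    gainMatrix_mulVec_apply]

theorem one_vecMul_smallGainMatrix_apply [Fintype ι] [DivisionRing 𝕜] (κ ρ α : ι → 𝕜) (j : ι) :
    (1 ᵥ* smallGainMatrix κ ρ α) j = -κ j + ∑ i ∈ univ.erase j, ρ i / α j := by
  rw [smallGainMatrix, Matrix.vecMul_add, Pi.add_apply, Matrix.vecMul_diagonal, Pi.one_apply,
    one_mul, Pi.neg_apply, one_vecMul_gainMatrix_apply]

end SmallGain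

/-- Small-gain compositional inequality (arithmetic core of Theorem 4.1):
if `d i ≤ −κ i·v i + ρ i·Σ_{j≠i} v j / α j` and each column sum
`−κ j + Σ_{i≠j} ρ i / α j` is at most `μ < 0`, then `Σ d ≤ μ·Σ v`. -/
theorem small_gain_sum_bound
    {M : ℕ} (hM : 1 ≤ M)
    (κ α ρ v d : Fin M → ℝ)
    (hκ : ∀ i, 0 < κ i) (hα : ∀ i, 0 < α i) (hρ : ∀ i, 0 ≤ ρ i)
    (hv : ∀ i, 0 ≤ v i)
    (hd : ∀ i, d i ≤ -(κ i) * v i + ρ i * ∑ j ∈ univ.erase i, v j / α j)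
    (μ : ℝ) (hμ : μ < 0)
    (hsg : ∀ j, -(κ j) + ∑ i ∈ univ.erase j, ρ i / α j ≤ μ) :
    ∑ i, d i ≤ μ * ∑ i, v i :=
  small_gain_sum_bound_general hv
    (fun i => (hd i).trans_eq (smallGainMatrix_mulVec_apply κ ρ α v i).symm)
    (fun j => (one_vecMul_smallGainMatrix_apply κ ρ α j).trans_le (hsg j))
end

section
/- Let M ≥ 1 and, for each i ∈ {1,…,M}, let n_i be a positive integer, α_i > 0, κ_i > 0, ρ_i ≥ 0 real constants, and V_i : ℝ^{n_i} → ℝ a function with α_i·‖y‖² ≤ V_i(y) for all y ∈ ℝ^{n_i}. Let x_i : ℝ → ℝ^{n_i} be functions such that, for each i, the map t ↦ V_i(x_i(t)) is differentiable with derivative satisfying (d/dt) V_i(x_i(t)) ≤ −κ_i·V_i(x_i(t)) + ρ_i·Σ_{j≠i} ‖x_j(t)‖² for all t. Suppose there exists μ < 0 such that −κ_j + Σ_{i≠j} ρ_i/α_j ≤ μ for every j ∈ {1,…,M}. Then the function t ↦ V(t) := Σ_{i=1}^M V_i(x_i(t)) is differentiable with (d/dt) V(t) ≤ −κ·V(t)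 for all t, where κ := −μ > 0. -/
/-!
The lower bound on each `V j` gives `‖x j‖² ≤ V j / αl j`, so the dissipation inequalities form
a linear comparison system in the values `V j` with matrix `-K + ρ̂`, where `ρ̂ i j = ρ i / αl j`
off the diagonal. Summing its rows leaves the column sums of this matrix as coefficients of the
nonnegative numbers `V j`; the small-gain condition bounds each of them by `μ`.
-/

open Finset

section ComparisonMatrix

open Matrix

theorem sum_mulVec_le_mul_sum {m n R : Type*} [Fintype m] [Fintype n] [Semiring R]
    [PartialOrder R] [IsOrderedRing R] {A : Matrix m n R} {v : n → R} {c : R}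
    (hA : ∀ j, ∑ i, A i j ≤ c) (hv : ∀ j, 0 ≤ v j) :
    ∑ i, (A *ᵥ v) i ≤ c * ∑ j, v j := by
  calc ∑ i, (A *ᵥ v) i = ∑ j, (∑ i, A i j) * v j := by
        simp only [mulVec, dotProduct, sum_mul]
        exact sum_comm
    _ ≤ ∑ j, c * v j := sum_le_sum fun j _ => mul_le_mul_of_nonneg_right (hA j) (hv j)
    _ = c * ∑ j, v j := (mul_sum _ _ _).symm

theorem deriv_sum_le_of_deriv_le_mulVec {ι : Type*} [Fintype ι] {A : Matrix ι ι ℝ}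
    {v : ι → ℝ → ℝ} {c t : ℝ} (hA : ∀ j, ∑ i, A i j ≤ c) (hv : ∀ i, 0 ≤ v i t)
    (hdiff : ∀ i, DifferentiableAt ℝ (v i) t)
    (hderiv : ∀ i, deriv (v i) t ≤ (A *ᵥ fun j => v j t) i) :
    deriv (fun s => ∑ i, v i s) t ≤ c * ∑ i, v i t := by
  calc deriv (fun s => ∑ i, v i s) t = ∑ i, deriv (v i) t :=
        deriv_fun_sum fun i _ => hdiff i
    _ ≤ ∑ i, (A *ᵥ fun j => v j t) i := sum_le_sum fun i _ => hderiv i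
    _ ≤ c * ∑ i, v i t := sum_mulVec_le_mul_sum hA hv

variable {ι R : Type*} [DecidableEq ι] [Field R]

/-- The matrix `-K + ρ̂` of the small-gain condition `𝟙ᵀ(-K + ρ̂) < 0`: decay rates `κ` on the
diagonal of `K`, and interconnection gains `ρ̂ i j = ρ i / α j` for `i ≠ j`. -/
def comparisonMatrix (κ ρ α : ι → R) : Matrix ι ι R :=
  of fun i j => if i = j then -κ i else ρ i / α j

theorem comparisonMatrix_apply_self (κ ρ α : ι → R) (i : ι) :
    comparisonMatrix κ ρ α i i = -κ i :=
  if_pos rfl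

theorem comparisonMatrix_apply_of_ne (κ ρ α : ι → R) {i j : ι} (hij : i ≠ j) :
    comparisonMatrix κ ρ α i j = ρ i / α j :=
  if_neg hij

variable [Fintype ι]

theorem sum_comparisonMatrix_col (κ ρ α : ι → R) (j : ι) :
    ∑ i, comparisonMatrix κ ρ α i j = -κ j + ∑ i ∈ univ.erase j, ρ i / α j := by
  rw [← add_sum_erase univ _ (mem_univ j), comparisonMatrix_apply_self]
  congr 1
  exact sum_congr rfl fun i hi => comparisonMatrix_apply_of_ne κ ρ α (ne_of_mem_erase hi)

theorem comparisonMatrix_mulVec_apply (κ ρ α v : ι → R) (i : ι) :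
    (comparisonMatrix κ ρ α *ᵥ v) i = -κ i * v i + ∑ j ∈ univ.erase i, ρ i / α j * v j := by
  rw [mulVec, dotProduct, ← add_sum_erase univ _ (mem_univ i), comparisonMatrix_apply_self]
  congr 1
  refine sum_congr rfl fun j hj => ?_
  rw [comparisonMatrix_apply_of_ne κ ρ α (ne_of_mem_erase hj).symm]

theorem dissipation_le_comparisonMatrix_mulVec [LinearOrder R] [IsStrictOrderedRing R]
    {κ ρ α v w : ι → R} {i : ι} (hα : ∀ j, 0 < α j) (hρ : 0 ≤ ρ i)
    (hw : ∀ j, α j * w j ≤ v j) :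
    -κ i * v i + ρ i * ∑ j ∈ univ.erase i, w j ≤ (comparisonMatrix κ ρ α *ᵥ v) i := by
  have gain_le (j : ι) : ρ i * w j ≤ ρ i / α j * v j := by
    calc ρ i * w j ≤ ρ i * (v j / α j) :=
          mul_le_mul_of_nonneg_left ((le_div_iff₀' (hα j)).2 (hw j)) hρ
      _ = ρ i / α j * v j := by ring
  rw [comparisonMatrix_mulVec_apply, mul_sum]
  exact add_le_add le_rfl (sum_le_sum fun j _ => gain_le j)

end ComparisonMatrix

theorem network_CLF_decay_general {ι : Type*} [Fintype ι] [DecidableEq ι]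
    {E : ι → Type*} [∀ i, Norm (E i)]
    {α κ ρ : ι → ℝ} (hα : ∀ i, 0 < α i) (hρ : ∀ i, 0 ≤ ρ i)
    {V : ∀ i, E i → ℝ} (hlow : ∀ i y, α i * ‖y‖ ^ 2 ≤ V i y)
    {x : ∀ i, ℝ → E i} (hdiff : ∀ i, Differentiable ℝ fun t => V i (x i t))
    (hderiv : ∀ i t, deriv (fun t => V i (x i t)) t ≤
      -(κ i) * V i (x i t) + ρ i * ∑ j ∈ univ.erase i, ‖x j t‖ ^ 2)
    {μ : ℝ} (hsg : ∀ j, -(κ j) + ∑ i ∈ univ.erase j, ρ i / α j ≤ μ) :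
    Differentiable ℝ (fun t => ∑ i, V i (x i t)) ∧
      ∀ t, deriv (fun t => ∑ i, V i (x i t)) t ≤ μ * ∑ i, V i (x i t) := by
  refine ⟨Differentiable.fun_sum fun i _ => hdiff i, fun t => ?_⟩
  have col_le (j : ι) : ∑ i, comparisonMatrix κ ρ α i j ≤ μ :=
    (sum_comparisonMatrix_col κ ρ α j).trans_le (hsg j)
  have V_nonneg (i : ι) : 0 ≤ V i (x i t) :=
    (mul_nonneg (hα i).le (sq_nonneg _)).trans (hlow i (x i t))
  exact deriv_sum_le_of_deriv_le_mulVec col_le V_nonneg (fun i => hdiff i t) fun i =>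
    (hderiv i t).trans <|
      dissipation_le_comparisonMatrix_mulVec hα (hρ i) fun j => hlow j (x j t)

/-- Compositional construction of the network Lyapunov decay (Theorem 4.1):
if each subsystem Lyapunov function satisfies the ISS dissipation inequality
along the network trajectory and the small-gain condition holds with margin
`μ < 0`, then `V = Σ_i V_i(x_i(·))` is differentiable and decays with rate
`κ = −μ`, i.e. `(d/dt)V(t) ≤ −κ·V(t) = μ·V(t)`. -/
theorem network_CLF_decay
    {M : ℕ} (hM : 1 ≤ M) (n : Fin M → ℕ) (hn : ∀ i, 0 < n i)
    (αl κ ρ : Fin M → ℝ)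
    (hαl : ∀ i, 0 < αl i) (hκ : ∀ i, 0 < κ i) (hρ : ∀ i, 0 ≤ ρ i)
    (V : ∀ i : Fin M, EuclideanSpace ℝ (Fin (n i)) → ℝ)
    (hlow : ∀ (i : Fin M) (y : EuclideanSpace ℝ (Fin (n i))),
      αl i * ‖y‖ ^ 2 ≤ V i y)
    (x : ∀ i : Fin M, ℝ → EuclideanSpace ℝ (Fin (n i)))
    (hdiff : ∀ i, Differentiable ℝ (fun t => V i (x i t)))
    (hderiv : ∀ (i : Fin M) (t : ℝ),
      deriv (fun t => V i (x i t)) t ≤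
        -(κ i) * V i (x i t) + ρ i * ∑ j ∈ univ.erase i, ‖x j t‖ ^ 2)
    (μ : ℝ) (hμ : μ < 0)
    (hsg : ∀ j, -(κ j) + ∑ i ∈ univ.erase j, ρ i / αl j ≤ μ) :
    Differentiable ℝ (fun t => ∑ i, V i (x i t)) ∧
    ∀ t : ℝ, deriv (fun t => ∑ i, V i (x i t)) t ≤ μ * ∑ i, V i (x i t) :=
  network_CLF_decay_general hαl hρ hlow hdiff hderiv hsg
end
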